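/- arXiv:2101.06726 — 2 statements merged into one kernel-verified Lean document; each statement's English description precedes it below -/
import Mathlib

section
/- For every prime power q there exists a simple graph on n = q³ − q² + q − 1 vertices that is K_{3,3}-free (contains no complete bipartite subgraph K_{3,3}) and has at least (q⁵ − q⁴ + q³ − 2q²)/2 edges. -/
/-!
Let `σ` be a ring endomorphism of a field `K`, put `N x = x * σ x`, and join two nonzero vectors of
the plane `K²`, taken up to scalars of norm one, when the area they span has norm one.

Given three distinct vertices `u₀, u₁, u₂`, the areas `xᵢ` that they span with a common neighbour
`v` have norm one and satisfy one linear relation `α x₀ + β x₁ + γ x₂ = 0` that does not depend on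
`v`. As `σ t = t⁻¹` for `t = x₁ / x₀`, the equation `N (α + β t) = N γ` is quadratic in `t`, and `t`
determines `v`; so there are at most two common neighbours.

Every vertex has `|K|` neighbours. For `|K| = q ^ 2` and `σ x = x ^ q` there are `q + 1` scalars of
norm one, hence `(q ^ 4 - 1) / (q + 1)` vertices.
-/

open Function Polynomial

lemma not_injective_of_quadratic_eq_zero {R : Type*} [CommRing R] [IsDomain R] {a b c : R}
    (ha : a ≠ 0) {t : Fin 3 → R} (ht : ∀ i, a * t i ^ 2 + b * t i + c = 0) : ¬ Injective t := by
  intro hinj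
  have hdegree : (C a * X ^ 2 + C b * X + C c).natDegree = 2 := natDegree_quadratic ha
  have hzero : C a * X ^ 2 + C b * X + C c = 0 :=
    eq_zero_of_natDegree_lt_card_of_eval_eq_zero _ hinj (fun i ↦ by simpa using ht i)
      (by simp [hdegree])
  simp [hzero] at hdegree

lemma two_mul_ncard_edgeSet_of_card_neighborSet {V : Type*} [Finite V] {G : SimpleGraph V} {d : ℕ}
    (hd : ∀ v, Nat.card (G.neighborSet v) = d) : 2 * G.edgeSet.ncard = Nat.card V * d := by
  classical
  have := Fintype.ofFinite V
  have hdegree : ∀ v, G.degree v = d := fun v ↦ by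
    rw [← G.card_neighborSet_eq_degree, ← Nat.card_eq_fintype_card, hd]
  rw [← G.coe_edgeFinset, Set.ncard_coe_finset, ← G.sum_degrees_eq_twice_card_edges,
    Finset.sum_congr rfl fun v _ ↦ hdegree v]
  simp

/-- The oriented area of the parallelogram spanned by two vectors of the plane, that is, the
standard symplectic form. -/
def area {R : Type*} [CommRing R] (u v : R × R) : R := u.1 * v.2 - u.2 * v.1

section Area

variable {R : Type*} [CommRing R]

lemma area_self (u : R × R) : area u u = 0 := by simp only [area]; ring

lemma neg_area (u v : R × R) : -area u v = area v u := by simp only [area]; ring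

lemma area_smul_smul (a b : R) (u v : R × R) : area (a • u) (b • v) = a * b * area u v := by
  simp only [area, Prod.smul_fst, Prod.smul_snd, smul_eq_mul]; ring

lemma area_add_smul_right (u v w : R × R) (c : R) :
    area u (w + c • v) = area u w + c * area u v := by
  simp only [area, Prod.fst_add, Prod.snd_add, Prod.smul_fst, Prod.smul_snd, smul_eq_mul]; ring

lemma area_smul_eq_add (u v w : R × R) : area u w • v = area v w • u + area u v • w := by
  ext <;> simp only [area, Prod.fst_add, Prod.snd_add, Prod.smul_fst, Prod.smul_snd,
    smul_eq_mul] <;> ring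

lemma area_plucker (a b c d : R × R) :
    area b c * area a d + area c a * area b d + area a b * area c d = 0 := by
  simp only [area]; ring

end Area

lemma area_eq_zero_of_div_eq_div {K : Type*} [Field K] {u u' v w : K × K} (hu : area u u' ≠ 0)
    (hv : area u v ≠ 0) (hw : area u w ≠ 0)
    (h : area u' v / area u v = area u' w / area u w) : area v w = 0 := by
  rw [div_eq_div_iff hv hw] at h
  have hplucker := area_plucker u u' v w
  rw [← neg_area u v] at hplucker
  refine (mul_eq_zero_iff_left hu).1 ?_
  linear_combination hplucker - h

lemma exists_area_eq_one {K : Type*} [Field K] {u : K × K} (hu : u ≠ 0) : ∃ w, area u w = 1 := by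
  obtain ⟨x, y⟩ := u
  by_cases hx : x = 0
  · have hy : y ≠ 0 := by rintro rfl; exact hu (by simp [hx])
    exact ⟨(-y⁻¹, 0), by simp [area, hy]⟩
  · exact ⟨(0, x⁻¹), by simp [area, hx]⟩

/-- The map `x ↦ x * σ x`, which is the norm to the fixed field when `σ` is an involution. -/
def twistedNorm {R : Type*} [CommRing R] (σ : R →+* R) : R →* R := MonoidHom.id R * σ

/-- The group of units of twisted norm one, the scalars up to which vectors are identified. -/
def normOne {R : Type*} [CommRing R] (σ : R →+* R) : Subgroup Rˣ :=
  (Units.map (twistedNorm σ)).ker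

section Norm

variable {R : Type*} [CommRing R] {σ : R →+* R}

lemma twistedNorm_apply (x : R) : twistedNorm σ x = x * σ x := rfl

lemma twistedNorm_neg (x : R) : twistedNorm σ (-x) = twistedNorm σ x := by
  simp [twistedNorm_apply]

lemma mem_normOne {s : Rˣ} : s ∈ normOne σ ↔ twistedNorm σ s = 1 := by
  simp [normOne, MonoidHom.mem_ker, Units.ext_iff]

end Norm

section Field

variable {K : Type*} [Field K] {σ : K →+* K}

lemma ne_zero_of_twistedNorm_eq_one {x : K} (hx : twistedNorm σ x = 1) : x ≠ 0 := by
  rintro rfl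
  simp [twistedNorm_apply] at hx

lemma twistedNorm_div_eq_one {x y : K} (hx : twistedNorm σ x = 1) (hy : twistedNorm σ y = 1) :
    twistedNorm σ (y / x) = 1 := by
  rw [twistedNorm_apply] at *
  rw [map_div₀, div_mul_div_comm, hx, hy, div_one]

lemma quadratic_of_twistedNorm_eq_one {α β γ x y z : K} (hrel : α * x + β * y + γ * z = 0)
    (hx : twistedNorm σ x = 1) (hy : twistedNorm σ y = 1) (hz : twistedNorm σ z = 1) :
    σ α * β * (y / x) ^ 2 + (twistedNorm σ α + twistedNorm σ β - twistedNorm σ γ) * (y / x)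
      + α * σ β = 0 := by
  have hx0 : x ≠ 0 := ne_zero_of_twistedNorm_eq_one hx
  have hsum : α + β * (y / x) = -(γ * (z / x)) := by field_simp; linear_combination hrel
  have hnorm : twistedNorm σ (α + β * (y / x)) = twistedNorm σ γ := by
    rw [hsum, twistedNorm_neg, map_mul, twistedNorm_div_eq_one hx hz, mul_one]
  have ht : twistedNorm σ (y / x) = 1 := twistedNorm_div_eq_one hx hy
  generalize y / x = t at *
  simp only [twistedNorm_apply, map_add, map_mul] at *
  linear_combination t * hnorm - (β * σ β * t + α * σ β) * ht

variable (σ) in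
/-- The vertices of the norm-area graph: nonzero vectors of the plane up to scalars of norm one. -/
abbrev NormAreaVertex : Type _ := MulAction.orbitRel.Quotient (normOne σ) {v : K × K // v ≠ 0}

/-- The vertex represented by a nonzero vector. -/
abbrev NormAreaVertex.mk (u : {v : K × K // v ≠ 0}) : NormAreaVertex σ := Quotient.mk _ u

lemma NormAreaVertex.mk_eq_mk_iff {u v : {v : K × K // v ≠ 0}} :
    (NormAreaVertex.mk u : NormAreaVertex σ) = .mk v ↔
      ∃ s : K, twistedNorm σ s = 1 ∧ s • v.1 = u.1 := by
  rw [Quotient.eq, MulAction.orbitRel_apply, MulAction.mem_orbit_iff]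
  constructor
  · rintro ⟨s, rfl⟩
    exact ⟨(s : Kˣ), mem_normOne.1 s.2, rfl⟩
  · rintro ⟨s, hs, h⟩
    exact ⟨⟨Units.mk0 s (ne_zero_of_twistedNorm_eq_one hs), mem_normOne.2 hs⟩, Subtype.ext h⟩

variable (σ) in
/-- The graph joining two vertices when the area that they span has norm one. -/
def normAreaGraph : SimpleGraph (NormAreaVertex σ) where
  Adj := Quotient.lift₂ (fun u v ↦ twistedNorm σ (area u.1 v.1) = 1) <| by
    rintro _ _ u v ⟨s, rfl⟩ ⟨t, rfl⟩
    change (twistedNorm σ (area (((s : Kˣ) : K) • u.1) (((t : Kˣ) : K) • v.1)) = 1) = _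
    rw [area_smul_smul, map_mul, map_mul, mem_normOne.1 s.2, mem_normOne.1 t.2, one_mul, one_mul]
  symm := ⟨by
    rintro ⟨u⟩ ⟨v⟩ h
    change twistedNorm σ (area v.1 u.1) = 1
    rwa [← neg_area, twistedNorm_neg]⟩
  loopless := ⟨by
    rintro ⟨u⟩ h
    exact ne_zero_of_twistedNorm_eq_one h (area_self u.1)⟩

lemma normAreaGraph_adj_mk {u v : {v : K × K // v ≠ 0}} :
    (normAreaGraph σ).Adj (.mk u) (.mk v) ↔ twistedNorm σ (area u.1 v.1) = 1 := Iff.rfl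

lemma area_ne_zero_of_common_neighbor {u v w : {v : K × K // v ≠ 0}}
    (huv : (NormAreaVertex.mk u : NormAreaVertex σ) ≠ .mk v)
    (hu : (normAreaGraph σ).Adj (.mk u) (.mk w)) (hv : (normAreaGraph σ).Adj (.mk v) (.mk w)) :
    area u.1 v.1 ≠ 0 := by
  rw [normAreaGraph_adj_mk] at hu hv
  intro h
  refine huv (NormAreaVertex.mk_eq_mk_iff.2 ⟨_, twistedNorm_div_eq_one hv hu, ?_⟩)
  have hparallel : area u.1 w.1 • v.1 = area v.1 w.1 • u.1 := by
    rw [area_smul_eq_add, h, zero_smul, add_zero]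
  rw [div_eq_inv_mul, mul_smul, hparallel, inv_smul_smul₀ (ne_zero_of_twistedNorm_eq_one hv)]

variable (σ)

theorem normAreaGraph_K33_free :
    ¬ ∃ u v : Fin 3 → NormAreaVertex σ, Injective u ∧ Injective v ∧
      ∀ i j, (normAreaGraph σ).Adj (u i) (v j) := by
  rintro ⟨u, v, hu, hv, hadj⟩
  choose x hx using fun i ↦ Quotient.exists_rep (u i)
  choose y hy using fun j ↦ Quotient.exists_rep (v j)
  obtain rfl : (fun i ↦ NormAreaVertex.mk (x i)) = u := funext hx
  obtain rfl : (fun j ↦ NormAreaVertex.mk (y j)) = v := funext hy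
  have hnorm (i j) : twistedNorm σ (area (x i).1 (y j).1) = 1 := hadj i j
  have hxne {i j} (hij : i ≠ j) : area (x i).1 (x j).1 ≠ 0 :=
    area_ne_zero_of_common_neighbor (hu.ne hij) (hadj i 0) (hadj j 0)
  have hyne {i j} (hij : i ≠ j) : area (y i).1 (y j).1 ≠ 0 :=
    area_ne_zero_of_common_neighbor (hv.ne hij) (hadj 0 i).symm (hadj 0 j).symm
  have hlead : σ (area (x 1).1 (x 2).1) * area (x 2).1 (x 0).1 ≠ 0 :=
    mul_ne_zero ((map_ne_zero σ).2 (hxne (by decide))) (hxne (by decide))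
  refine not_injective_of_quadratic_eq_zero hlead (fun j ↦ quadratic_of_twistedNorm_eq_one
    (area_plucker (x 0).1 (x 1).1 (x 2).1 (y j).1) (hnorm 0 j) (hnorm 1 j) (hnorm 2 j)) ?_
  intro j k hjk
  by_contra hne
  exact hyne hne (area_eq_zero_of_div_eq_div (hxne (by decide))
    (ne_zero_of_twistedNorm_eq_one (hnorm 0 j)) (ne_zero_of_twistedNorm_eq_one (hnorm 0 k)) hjk)

lemma card_neighborSet_normAreaGraph (x : NormAreaVertex σ) :
    Nat.card ((normAreaGraph σ).neighborSet x) = Nat.card K := by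
  obtain ⟨u, rfl⟩ := Quotient.exists_rep x
  obtain ⟨w, hw⟩ := exists_area_eq_one u.2
  have harea (c : K) : area u.1 (w + c • u.1) = 1 := by
    rw [area_add_smul_right, hw, area_self, mul_zero, add_zero]
  have hne (c : K) : w + c • u.1 ≠ 0 := fun h ↦ by simpa [h, area] using harea c
  let neighbor (c : K) : (normAreaGraph σ).neighborSet (.mk u) :=
    ⟨.mk ⟨w + c • u.1, hne c⟩, normAreaGraph_adj_mk.2 (by rw [harea, map_one])⟩
  refine (Nat.card_eq_of_bijective neighbor ⟨fun c d hcd ↦ ?_, ?_⟩).symm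
  · obtain ⟨s, -, hs⟩ := NormAreaVertex.mk_eq_mk_iff.1 (Subtype.ext_iff.1 hcd)
    have hs_one : s = 1 := by
      have := area_smul_smul 1 s u.1 (w + d • u.1)
      rwa [one_smul, hs, harea, harea, one_mul, mul_one, eq_comm] at this
    rw [hs_one, one_smul, add_right_inj] at hs
    exact (smul_left_injective K u.2 hs).symm
  · rintro ⟨⟨v⟩, hv⟩
    have hs : area u.1 v.1 ≠ 0 := ne_zero_of_twistedNorm_eq_one hv
    refine ⟨area v.1 w / area u.1 v.1, Subtype.ext (Eq.symm ?_)⟩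
    refine NormAreaVertex.mk_eq_mk_iff.2 ⟨_, hv, ?_⟩
    rw [smul_add, smul_smul, mul_div_cancel₀ _ hs, add_comm, ← area_smul_eq_add, hw, one_smul]

lemma card_normAreaVertex_mul_card_normOne [Finite K] :
    Nat.card (NormAreaVertex σ) * Nat.card (normOne σ) = Nat.card K ^ 2 - 1 := by
  classical
  have hfree (v : {v : K × K // v ≠ 0}) : MulAction.stabilizer (normOne σ) v = ⊥ := by
    refine (Subgroup.eq_bot_iff_forall _).2 fun s hs ↦ Subtype.ext (Units.ext ?_)
    have hsv : ((s : Kˣ) : K) • v.1 = (1 : K) • v.1 := by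
      rw [one_smul]
      exact congrArg Subtype.val hs
    exact smul_left_injective K v.2 hsv
  have := Fintype.ofFinite K
  calc Nat.card (NormAreaVertex σ) * Nat.card (normOne σ)
    _ = Nat.card {v : K × K // v ≠ 0} := by
      rw [Nat.card_congr (MulAction.selfEquivOrbitsQuotientProd hfree), Nat.card_prod]
    _ = Nat.card K ^ 2 - 1 := by simp [sq]

variable {σ}

lemma card_normOne_of_pow [Finite K] {q : ℕ} (hK : Nat.card K = q ^ 2) (hσ : ∀ x, σ x = x ^ q) :
    Nat.card (normOne σ) = q + 1 := by
  have hunits : Nat.card Kˣ = (q + 1) * (q - 1) := by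
    rw [Nat.card_units, hK]
    simpa using Nat.sq_sub_sq q 1
  have hker : normOne σ = (powMonoidHom (q + 1) : Kˣ →* Kˣ).ker := by
    ext s
    simp [mem_normOne, twistedNorm_apply, hσ, MonoidHom.mem_ker, Units.ext_iff, pow_succ']
  rw [hker, IsCyclic.card_powMonoidHom_ker, hunits, Nat.gcd_mul_right_left]

lemma card_normAreaVertex_of_pow [Finite K] {q : ℕ} (hK : Nat.card K = q ^ 2)
    (hσ : ∀ x, σ x = x ^ q) : Nat.card (NormAreaVertex σ) = (q ^ 2 + 1) * (q - 1) := by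
  have h := card_normAreaVertex_mul_card_normOne σ
  rw [card_normOne_of_pow hK hσ, hK] at h
  refine Nat.eq_of_mul_eq_mul_right q.succ_pos (h.trans ?_)
  have hsq : q ^ 2 - 1 = (q + 1) * (q - 1) := by simpa using Nat.sq_sub_sq q 1
  have hfour : (q ^ 2) ^ 2 - 1 = (q ^ 2 + 1) * (q ^ 2 - 1) := by simpa using Nat.sq_sub_sq (q ^ 2) 1
  rw [hfour, hsq, mul_comm (q + 1), mul_assoc]

end Field

lemma exists_field_card_sq_ringHom_pow {q : ℕ} (hq : IsPrimePow q) :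
    ∃ (K : Type) (_ : Field K) (σ : K →+* K), Nat.card K = q ^ 2 ∧ ∀ x, σ x = x ^ q := by
  obtain ⟨p, k, hp, hk, rfl⟩ := hq
  have : Fact p.Prime := ⟨hp.nat_prime⟩
  refine ⟨GaloisField p (k * 2), inferInstance, iterateFrobenius _ p k, ?_, fun x ↦ rfl⟩
  rw [GaloisField.card p _ (by positivity), pow_mul]

/-- For every prime power `q` there is a simple graph on `n = q³ − q² + q − 1` vertices
that contains no `K_{3,3}` subgraph and has at least `(q⁵ − q⁴ + q³ − 2q²)/2` edges. -/
theorem exists_K33_free_graph {q : ℕ} (hq : IsPrimePow q) :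
    ∃ (V : Type) (_ : Fintype V) (G : SimpleGraph V),
      Fintype.card V = q ^ 3 - q ^ 2 + q - 1 ∧
      (¬ ∃ u v : Fin 3 → V, Function.Injective u ∧ Function.Injective v ∧
        (∀ i j, u i ≠ v j) ∧ (∀ i j, G.Adj (u i) (v j))) ∧
      (q : ℤ) ^ 5 - (q : ℤ) ^ 4 + (q : ℤ) ^ 3 - 2 * (q : ℤ) ^ 2 ≤
        2 * (G.edgeSet.ncard : ℤ) := by
  obtain ⟨K, _, σ, hK, hσ⟩ := exists_field_card_sq_ringHom_pow hq
  have : Finite K := Nat.finite_of_card_ne_zero (by rw [hK]; exact pow_ne_zero 2 hq.ne_zero)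
  have hcard := card_normAreaVertex_of_pow hK hσ
  have := Fintype.ofFinite (NormAreaVertex σ)
  refine ⟨NormAreaVertex σ, this, normAreaGraph σ, ?_,
    fun ⟨u, v, hu, hv, _, hadj⟩ ↦ normAreaGraph_K33_free σ ⟨u, v, hu, hv, hadj⟩, ?_⟩
  · rw [← Nat.card_eq_fintype_card, hcard, Nat.mul_sub_one, add_mul, ← pow_succ, one_mul,
      ← Nat.sub_sub, Nat.sub_add_comm (Nat.pow_le_pow_right hq.pos (by norm_num))]
  · have hedges := two_mul_ncard_edgeSet_of_card_neighborSet (card_neighborSet_normAreaGraph σ)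
    rw [hcard, hK] at hedges
    zify [hq.one_lt.le] at hedges
    rw [hedges]
    linarith [sq_nonneg (q : ℤ)]
end

section
/- For every prime power q and every integer r ≥ 2 there exists a simple graph on n = (q^{r−1}+1)(q−1) vertices that is K_{r,(r−1)!+1}-free (contains no complete bipartite subgraph K_{r,(r−1)!+1}) and has at least (1/2)·(q^{2r−2}−1)(q−1) edges. -/
/-!
The graph is the completed projective norm graph on `ℙ¹(L) × Fˣ` with `[L : F] = r - 1`. Dividing
the equations of the common neighbours of `r` vertices by the equation of the first vertex, in an
affine chart of `ℙ¹(L)`, turns them into `r - 1` norm equations `N (t + c i) = d i` with distinct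
`c i`. Replacing the conjugates of `t` by independent unknowns, as Kollár, Rónyai and Szabó do,
gives a system `∏ j, (x j - a i j) = b i` of `n = r - 1` equations with distinct entries in each
column of `a`.

Such a system has at most `n!` solutions. Its left-hand sides `f` make `K[x]` integral over `K[f]`:
if a valuation that is at most `1` on `K[f]` exceeded `1` at some `x j`, then every row would
contain a factor of value less than `1`, two rows could not have it in the same column, and so some
row would have it in column `j`. Moreover each `f i` has degree at most one in every variable. If
`y` has degree `N` over `K[f]`, the polynomials `f ^ e * y ^ s` with `|e| ≤ M` and `s < N` are
independent and have degree at most `M + O(1)` in each variable, so that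
`N * (M + n).choose n ≤ (M + O(1)) ^ n` for all `M`, which forces `N ≤ n!`. Over an infinite
field some linear form `y` separates the points of a fibre, and its values there are roots of one
polynomial of degree `N`.
-/

open MvPolynomial
open scoped LinearAlgebra.Projectivization

section Counting

lemma le_factorial_of_forall_mul_choose_le {k c N : ℕ}
    (h : ∀ M, N * (M + k).choose k ≤ (M + c) ^ k) : N ≤ k.factorial := by
  have hquot (M : ℕ) : (N : ℝ) ≤ k.factorial * ((c + 1 * M) / (1 + 1 * M) : ℝ) ^ k := by
    have hM : N * (M + 1) ^ k ≤ k.factorial * (M + c) ^ k := calc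
      N * (M + 1) ^ k ≤ N * (k.factorial * (M + k).choose k) := by
        rw [← Nat.ascFactorial_eq_factorial_mul_choose]
        gcongr
        exact Nat.pow_succ_le_ascFactorial _ _
      _ = k.factorial * (N * (M + k).choose k) := by ring
      _ ≤ k.factorial * (M + c) ^ k := by gcongr; exact h M
    rw [div_pow, ← mul_div_assoc, le_div_iff₀ (by positivity)]
    convert! (Nat.cast_le (α := ℝ)).2 hM using 1 <;> push_cast <;> ring
  have hlim := ((tendsto_add_mul_div_add_mul_atTop_nhds (c : ℝ) 1 1 one_ne_zero).pow k).const_mul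
    (k.factorial : ℝ)
  rw [div_one, one_pow, mul_one] at hlim
  exact_mod_cast ge_of_tendsto' hlim hquot

lemma natCard_finsupp_degree_le (ι : Type*) [Fintype ι] (M : ℕ) :
    Nat.card {e : ι →₀ ℕ // e.degree ≤ M} = (M + Fintype.card ι).choose (Fintype.card ι) := by
  classical
  have mem_iff (e : Option ι →₀ ℕ) :
      e ∈ (Finset.univ : Finset (Option ι)).finsuppAntidiag M ↔ e none + e.some.degree = M := by
    simp [Finset.mem_finsuppAntidiag, Finsupp.degree_eq_sum, Fintype.sum_option]
  let homogenize : {e : ι →₀ ℕ // e.degree ≤ M} ≃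
      (Finset.univ : Finset (Option ι)).finsuppAntidiag M :=
    { toFun e := ⟨e.1.optionElim (M - e.1.degree), by simpa [mem_iff] using Nat.sub_add_cancel e.2⟩
      invFun e := ⟨e.1.some, (Nat.le_add_left _ _).trans_eq ((mem_iff _).1 e.2)⟩
      left_inv e := by simp
      right_inv e := by
        have hnone : M - e.1.some.degree = e.1 none := by have := (mem_iff _).1 e.2; omega
        simp [hnone] }
  rw [Nat.card_congr homogenize, Nat.card_eq_fintype_card, Fintype.card_coe,
    Finset.card_finsuppAntidiag_nat_eq_choose, Finset.card_univ, Fintype.card_option,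
    ← Nat.choose_symm_add]
  congr 1
  omega

lemma finrank_restrictDegree (ι K : Type*) [Fintype ι] [Field K] (m : ℕ) :
    Module.finrank K (restrictDegree ι K m) = (m + 1) ^ Fintype.card ι := by
  let bounded : {e : ι →₀ ℕ | ∀ i, e i ≤ m} ≃ (ι → Fin (m + 1)) :=
    (Finsupp.equivFunOnFinite.subtypeEquiv fun _ => Iff.rfl).trans
      (Equiv.subtypePiEquivPi.trans (Equiv.piCongrRight fun _ =>
        (Fin.equivSubtype.trans (Equiv.subtypeEquivRight fun _ => Nat.lt_succ_iff)).symm))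
  rw [restrictDegree, Module.finrank_eq_nat_card_basis (basisRestrictSupport K _),
    Nat.card_congr bounded, Nat.card_fun, Nat.card_fin]
  simp

end Counting

section RankBound

variable {ι K κ : Type*} [Fintype ι] [Field K] {f : ι → MvPolynomial ι K}

lemma degreeOf_prod_pow_le (hdeg : ∀ i j, degreeOf j (f i) ≤ 1) (e : ι →₀ ℕ) (j : ι) :
    degreeOf j (∏ i, f i ^ e i) ≤ e.degree := calc
  degreeOf j (∏ i, f i ^ e i) ≤ ∑ i, degreeOf j (f i ^ e i) := degreeOf_prod_le _ _ _
  _ ≤ ∑ i, e i := Finset.sum_le_sum fun i _ =>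
      (degreeOf_pow_le _ _ _).trans (mul_le_of_le_one_right' (hdeg i j))
  _ = e.degree := (Finsupp.degree_eq_sum e).symm

lemma linearIndependent_prod_pow_mul (hf : AlgebraicIndependent K f)
    {w : κ → MvPolynomial ι K}
    (hw : LinearIndependent (Algebra.adjoin K (Set.range f)) w) :
    LinearIndependent K fun p : (ι →₀ ℕ) × κ => (∏ i, f i ^ p.1 i) * w p.2 := by
  have hmonomial := (basisMonomials ι K).linearIndependent.map' hf.aevalEquiv.toLinearMap
    (LinearMap.ker_eq_bot.2 hf.aevalEquiv.injective)
  convert! linearIndependent_smul hmonomial hw using 2 with p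
  simp [Subalgebra.smul_def, -aeval_eq_bind₁, aeval_monomial, Finsupp.prod_fintype]

theorem card_le_factorial_of_linearIndependent [Fintype κ] (hf : AlgebraicIndependent K f)
    (hdeg : ∀ i j, degreeOf j (f i) ≤ 1) {w : κ → MvPolynomial ι K}
    (hw : LinearIndependent (Algebra.adjoin K (Set.range f)) w) :
    Fintype.card κ ≤ (Fintype.card ι).factorial := by
  let c := Finset.univ.sup fun s => (w s).totalDegree
  refine le_factorial_of_forall_mul_choose_le (c := c + 1) fun M => ?_
  let product (p : {e : ι →₀ ℕ // e.degree ≤ M} × κ) : MvPolynomial ι K :=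
    (∏ i, f i ^ p.1.1 i) * w p.2
  have hproduct : LinearIndependent K product :=
    (linearIndependent_prod_pow_mul hf hw).comp (Prod.map Subtype.val id)
      (Subtype.val_injective.prodMap Function.injective_id)
  have hmem (p) : product p ∈ restrictDegree ι K (M + c) := by
    refine (mem_restrictDegree _ _ _).2 fun e he j => (le_degreeOf_of_mem_support j he).trans ?_
    refine (degreeOf_mul_le _ _ _).trans (add_le_add ?_ ?_)
    · exact (degreeOf_prod_pow_le hdeg _ j).trans p.1.2
    · exact (degreeOf_le_totalDegree _ _).trans (Finset.le_sup (f := fun s => (w s).totalDegree)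
        (Finset.mem_univ p.2))
  have hrestrict : LinearIndependent K
      fun p => (⟨product p, hmem p⟩ : restrictDegree ι K (M + c)) :=
    .of_comp (Submodule.subtype _) hproduct
  have := hrestrict.finite
  have := Fintype.ofFinite ({e : ι →₀ ℕ // e.degree ≤ M} × κ)
  have hcard := hrestrict.fintype_card_le_finrank
  rwa [← Nat.card_eq_fintype_card, Nat.card_prod, natCard_finsupp_degree_le,
    finrank_restrictDegree, mul_comm, Nat.card_eq_fintype_card] at hcard

end RankBound

section Integrality

variable {ι : Type*} [Fintype ι]

theorem valuation_le_one_of_prod_sub_le_one {L Γ₀ : Type*} [Field L]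
    [LinearOrderedCommGroupWithZero Γ₀] (v : Valuation L Γ₀) {x : ι → L} {a : ι → ι → L}
    (ha : ∀ i j, v (a i j) ≤ 1) (ha' : ∀ i i' j, i ≠ i' → v (a i j - a i' j) = 1)
    (hprod : ∀ i, v (∏ j, (x j - a i j)) ≤ 1) (j : ι) : v (x j) ≤ 1 := by
  classical
  by_contra! hj
  have hlarge (i : ι) : 1 < v (x j - a i j) := by
    rwa [v.map_sub_eq_of_lt_left ((ha i j).trans_lt hj)]
  have hsmall (i : ι) : ∃ j', v (x j' - a i j') < 1 := by
    by_contra! hge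
    refine (hprod i).not_gt ?_
    rw [map_prod, ← Finset.mul_prod_erase _ _ (Finset.mem_univ j)]
    exact (hlarge i).trans_le (le_mul_of_one_le_right' (Finset.one_le_prod' fun j' _ => hge j'))
  choose g hg using hsmall
  have hinj : Function.Injective g := by
    intro i i' hii'
    by_contra hne
    have hlt := v.map_sub_lt (hii' ▸ hg i') (hg i)
    rw [sub_sub_sub_cancel_left, ha' i i' _ hne] at hlt
    exact hlt.false
  obtain ⟨i, rfl⟩ := Finite.surjective_of_injective hinj j
  exact (hg i).not_gt (hlarge i)

theorem isIntegral_of_prod_sub_mem {K B : Type*} [Field K] [CommRing B] [IsDomain B] [Algebra K B]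
    (A : Subalgebra K B) {x : ι → B} {a : ι → ι → K} (ha : ∀ j, Function.Injective (a · j))
    (hA : ∀ i, ∏ j, (x j - algebraMap K B (a i j)) ∈ A) (j : ι) : IsIntegral A (x j) := by
  let L := FractionRing B
  rw [← isIntegral_algebraMap_iff (IsFractionRing.injective B L)]
  by_contra hj
  have : IsIntegrallyClosedIn (integralClosure A L).toSubring L :=
    inferInstanceAs (IsIntegrallyClosedIn (integralClosure A L) L)
  obtain ⟨V, hV, hjV⟩ := Subring.exists_le_valuationSubring_of_isIntegrallyClosedIn
    (R := (integralClosure A L).toSubring) (x := algebraMap B L (x j)) hj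
  have hAV {y : B} (hy : y ∈ A) : V.valuation (algebraMap B L y) ≤ 1 :=
    (V.valuation_le_one_iff _).2 (hV (isIntegral_algebraMap (x := (⟨y, hy⟩ : A))))
  have hK (c : K) : V.valuation (algebraMap K L c) ≤ 1 := by
    rw [IsScalarTower.algebraMap_apply K B L]
    exact hAV (A.algebraMap_mem c)
  have hK' {c : K} (hc : c ≠ 0) : V.valuation (algebraMap K L c) = 1 := by
    refine (hK c).antisymm ?_
    have hinv := hK c⁻¹
    rwa [map_inv₀, map_inv₀, inv_le_one₀ (by simpa [zero_lt_iff] using hc)] at hinv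
  refine hjV ((V.valuation_le_one_iff _).1 (valuation_le_one_of_prod_sub_le_one V.valuation
    (x := fun j => algebraMap B L (x j)) (a := fun i j => algebraMap K L (a i j))
    (fun i j => hK _) (fun i i' j hne => ?_) (fun i => ?_) j))
  · rw [← map_sub]
    exact hK' (sub_ne_zero.2 ((ha j).ne hne))
  · simpa [← IsScalarTower.algebraMap_apply] using hAV (hA i)

end Integrality

lemma linearIndependent_pow_natDegree_minpoly {A B : Type*} [CommRing A] [IsDomain A]
    [IsIntegrallyClosed A] [CommRing B] [IsDomain B] [Algebra A B] [Module.IsTorsionFree A B]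
    (y : B) : LinearIndependent A fun i : Fin (minpoly A y).natDegree => y ^ (i : ℕ) := by
  let K := FractionRing A
  let L := FractionRing B
  let _ : Algebra K L := FractionRing.liftAlgebra A L
  by_cases hy : IsIntegral A y
  · have h := (linearIndependent_pow (K := K) (algebraMap B L y)).restrict_scalars' A
    rw [minpoly.isIntegrallyClosed_eq_field_fractions K L hy, (minpoly.monic hy).natDegree_map] at h
    refine LinearIndependent.of_comp (Algebra.linearMap B L |>.restrictScalars A) ?_
    simpa [Function.comp_def]
  · rw [minpoly.eq_zero hy]
    simp

lemma exists_dual_injOn (K : Type*) {M : Type*} [Field K] [Infinite K] [AddCommGroup M] [Module K M]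
    {s : Set M} (hs : s.Finite) : ∃ φ : Module.Dual K M, Set.InjOn φ s := by
  have := hs.offDiag.to_subtype
  obtain ⟨φ, hφ⟩ := Module.exists_dual_forall_apply_ne_zero (K := K)
    (fun p : s.offDiag => p.1.1 - p.1.2) fun p => sub_ne_zero.2 p.2.2.2
  refine ⟨φ, fun x hx y hy hxy => ?_⟩
  by_contra hne
  exact hφ ⟨(x, y), hx, hy, hne⟩ (by simp [hxy])

lemma exists_eval_eq_dual {ι K : Type*} [Finite ι] [Field K] (φ : Module.Dual K (ι → K)) :
    ∃ y : MvPolynomial ι K, (eval · y) = φ := by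
  classical
  have := Fintype.ofFinite ι
  refine ⟨∑ i, C (φ fun j => if i = j then 1 else 0) * X i, funext fun x => ?_⟩
  simp [LinearMap.pi_apply_eq_sum_univ φ x, mul_comm]

section FiniteMultiaffineMap

variable {ι K : Type*} [Field K] {f : ι → MvPolynomial ι K}
  [Algebra.IsIntegral (Algebra.adjoin K (Set.range f)) (MvPolynomial ι K)]

lemma algebraicIndependent_of_isIntegral_adjoin [Finite ι] : AlgebraicIndependent K f := by
  refine (Algebra.IsAlgebraic.isTranscendenceBasis_of_lift_le_trdeg_of_finite K _ ?_).1
  simp [MvPolynomial.trdeg_of_isDomain]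

variable [Fintype ι]

lemma natDegree_minpoly_adjoin_le_factorial (hdeg : ∀ i j, degreeOf j (f i) ≤ 1)
    (y : MvPolynomial ι K) :
    (minpoly (Algebra.adjoin K (Set.range f)) y).natDegree ≤ (Fintype.card ι).factorial := by
  have hf : AlgebraicIndependent K f := algebraicIndependent_of_isIntegral_adjoin
  have : IsIntegrallyClosed (Algebra.adjoin K (Set.range f)) :=
    .of_equiv hf.aevalEquiv.toRingEquiv
  simpa using card_le_factorial_of_linearIndependent hf hdeg
    (linearIndependent_pow_natDegree_minpoly y)

lemma encard_image_eval_fiber_le_factorial (hdeg : ∀ i j, degreeOf j (f i) ≤ 1)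
    (b : ι → K) (y : MvPolynomial ι K) :
    ((eval · y) '' {x | ∀ i, eval x (f i) = b i}).encard ≤ (Fintype.card ι).factorial := by
  obtain hempty | ⟨x₀, hx₀⟩ := {x | ∀ i, eval x (f i) = b i}.eq_empty_or_nonempty
  · simp [hempty]
  let A := Algebra.adjoin K (Set.range f)
  let Q : Polynomial K := (minpoly A y).map ((eval x₀).comp (algebraMap A _))
  have hmonic : (minpoly A y).Monic := minpoly.monic (Algebra.IsIntegral.isIntegral y)
  have hroot : (eval · y) '' {x | ∀ i, eval x (f i) = b i} ⊆ Q.rootSet K := by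
    rintro _ ⟨x, hx, rfl⟩
    have heval : (eval x).comp (algebraMap A _) = (eval x₀).comp (algebraMap A _) := by
      have heqOn : Set.EqOn (aeval x) (aeval x₀) (A : Set (MvPolynomial ι K)) :=
        AlgHom.eqOn_adjoin_iff.2 (by rintro _ ⟨i, rfl⟩; exact (hx i).trans (hx₀ i).symm)
      exact RingHom.ext fun p => heqOn p.2
    rw [Polynomial.mem_rootSet, ← Polynomial.eval_map_algebraMap]
    refine ⟨(hmonic.map _).ne_zero, ?_⟩
    simpa [Q, ← heval, Polynomial.eval_map, Polynomial.aeval_def, Polynomial.hom_eval₂] using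
      congrArg (eval x) (minpoly.aeval A y)
  calc ((eval · y) '' {x | ∀ i, eval x (f i) = b i}).encard
    _ ≤ (Q.rootSet K).encard := Set.encard_le_encard hroot
    _ = (Q.rootSet K).ncard := (Q.rootSet_finite K).cast_ncard_eq.symm
    _ ≤ (Fintype.card ι).factorial := by
      exact_mod_cast (Q.ncard_rootSet_le K).trans (Polynomial.natDegree_map_le.trans
        (natDegree_minpoly_adjoin_le_factorial hdeg y))

theorem encard_fiber_le_factorial [Infinite K] (hdeg : ∀ i j, degreeOf j (f i) ≤ 1)
    (b : ι → K) :
    {x | ∀ i, eval x (f i) = b i}.encard ≤ (Fintype.card ι).factorial := by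
  by_contra! hlt
  obtain ⟨s, hs, hcard⟩ := Set.exists_subset_encard_eq (Order.add_one_le_of_lt hlt)
  obtain ⟨φ, hφ⟩ := exists_dual_injOn K
    (Set.finite_of_encard_eq_coe (k := (Fintype.card ι).factorial + 1) hcard)
  obtain ⟨y, hy⟩ := exists_eval_eq_dual φ
  have himage : s.encard ≤ (Fintype.card ι).factorial := by
    rw [← hφ.encard_image, ← hy]
    exact (Set.encard_le_encard (Set.image_mono hs)).trans
      (encard_image_eval_fiber_le_factorial hdeg b y)
  rw [hcard] at himage
  exact (Order.lt_add_one_iff.2 le_rfl).not_ge (by exact_mod_cast himage)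

end FiniteMultiaffineMap

section KollarRonyaiSzabo

variable {ι K : Type*} [Fintype ι] [Field K]

/-- The left-hand sides of the system `∏ j, (x j - a i j) = b i` of Kollár, Rónyai and Szabó,
as polynomials in the unknowns `x`. -/
noncomputable def rowProd (a : ι → ι → K) (i : ι) : MvPolynomial ι K := ∏ j, (X j - C (a i j))

lemma degreeOf_rowProd_le (a : ι → ι → K) (i j : ι) : degreeOf j (rowProd a i) ≤ 1 := by
  classical
  calc
    degreeOf j (rowProd a i) ≤ ∑ j', degreeOf j (X j' - C (a i j')) := degreeOf_prod_le _ _ _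
    _ ≤ ∑ j', if j = j' then 1 else 0 := Finset.sum_le_sum fun j' _ =>
        (degreeOf_sub_le _ _ _).trans (by simp [degreeOf_X])
    _ = 1 := by simp

lemma isIntegral_adjoin_rowProd {a : ι → ι → K} (ha : ∀ j, Function.Injective (a · j)) :
    Algebra.IsIntegral (Algebra.adjoin K (Set.range (rowProd a))) (MvPolynomial ι K) := by
  refine ⟨fun y => ?_⟩
  induction y using MvPolynomial.induction_on with
  | C c => exact isIntegral_algebraMap (x := algebraMap K _ c)
  | add p q hp hq => exact hp.add hq
  | mul_X p j hp =>
    exact hp.mul (isIntegral_of_prod_sub_mem _ ha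
      (fun i => Algebra.subset_adjoin (Set.mem_range_self i)) j)

theorem encard_prod_sub_eq_le_factorial {a : ι → ι → K} (ha : ∀ j, Function.Injective (a · j))
    (b : ι → K) :
    {x : ι → K | ∀ i, ∏ j, (x j - a i j) = b i}.encard ≤ (Fintype.card ι).factorial := by
  let toClosure := algebraMap K (AlgebraicClosure K)
  let a' (i j : ι) : AlgebraicClosure K := toClosure (a i j)
  have := isIntegral_adjoin_rowProd (a := a') fun j => toClosure.injective.comp (ha j)
  refine le_trans ?_ (encard_fiber_le_factorial (degreeOf_rowProd_le a') (toClosure ∘ b))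
  refine Set.encard_le_encard_of_injOn (f := (toClosure ∘ ·)) (fun x hx i => ?_)
    toClosure.injective.comp_left.injOn
  simp [rowProd, a', ← hx i]

end KollarRonyaiSzabo

theorem encard_norm_add_eq_le_factorial {F L ι : Type*} [Field F] [Field L] [Algebra F L]
    [FiniteDimensional F L] [IsGalois F L] [Fintype ι] (hι : Fintype.card ι = Module.finrank F L)
    {c : ι → L} (hc : Function.Injective c) (d : ι → F) :
    {t : L | ∀ i, Algebra.norm F (t + c i) = d i}.encard ≤ (Module.finrank F L).factorial := by
  let conj : ι ≃ Gal(L/F) := Fintype.equivOfCardEq (by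
    rw [hι, ← IsGalois.card_aut_eq_finrank, Nat.card_eq_fintype_card])
  have hinj : Function.Injective fun (t : L) j => conj j t := fun t t' h =>
    (conj (conj.symm 1)).injective (congrFun h _)
  rw [← hι]
  refine le_trans ?_ (encard_prod_sub_eq_le_factorial (a := fun i j => -conj j (c i))
    (fun j => neg_injective.comp ((conj j).injective.comp hc)) (algebraMap F L ∘ d))
  refine Set.encard_le_encard_of_injOn (fun t ht i => ?_) hinj.injOn
  rw [Function.comp_apply, ← ht i, Algebra.norm_eq_prod_automorphisms, ← conj.prod_comp]
  simp

section ProjectiveLine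

variable {L : Type*} [Field L]

/-- The `2 × 2` determinant with rows `x` and `y`, which detects equality of points of `ℙ¹(L)` and
supplies its affine coordinates. -/
def wedge (x y : Fin 2 → L) : L := x 0 * y 1 - x 1 * y 0

lemma wedge_eq_zero_iff {x y : Fin 2 → L} (hx : x ≠ 0) (hy : y ≠ 0) :
    wedge x y = 0 ↔ Projectivization.mk L x hx = Projectivization.mk L y hy := by
  have hrows := Matrix.linearIndependent_rows_iff_isUnit (A := Matrix.of ![x, y])
  rw [Matrix.isUnit_iff_isUnit_det, isUnit_iff_ne_zero, Matrix.det_fin_two] at hrows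
  rw [eq_comm (a := Projectivization.mk L x hx), Projectivization.mk_eq_mk_iff', ← not_iff_not,
    not_exists]
  exact hrows.symm.trans (LinearIndependent.pair_iff' hx)

lemma wedge_rep_eq_zero_iff {x y : ℙ L (Fin 2 → L)} : wedge x.rep y.rep = 0 ↔ x = y := by
  rw [wedge_eq_zero_iff x.rep_nonzero y.rep_nonzero, x.mk_rep, y.mk_rep]

lemma wedge_mul_dotProduct (p q x y : Fin 2 → L) :
    wedge p q * (x ⬝ᵥ y) = wedge x q * (p ⬝ᵥ y) + wedge p x * (q ⬝ᵥ y) := by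
  simp only [wedge, Matrix.vec2_dotProduct]
  ring

lemma exists_wedge_ne_zero {p : Fin 2 → L} (hp : p ≠ 0) : ∃ q, wedge p q ≠ 0 := by
  contrapose! hp
  simpa [wedge, funext_iff, Fin.forall_fin_two] using And.intro (hp ![0, 1]) (hp ![1, 0])

lemma dotProduct_eq_mul_div_add_div {p q x y : Fin 2 → L} (hpq : wedge p q ≠ 0)
    (hpx : wedge p x ≠ 0) (hpy : p ⬝ᵥ y ≠ 0) :
    x ⬝ᵥ y = p ⬝ᵥ y * (wedge p x / wedge p q) * (q ⬝ᵥ y / p ⬝ᵥ y + wedge x q / wedge p x) := by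
  field_simp
  linear_combination wedge_mul_dotProduct p q x y

lemma injOn_dotProduct_div_dotProduct {p q : Fin 2 → L} (hpq : wedge p q ≠ 0) :
    Set.InjOn (fun y : ℙ L (Fin 2 → L) => (q ⬝ᵥ y.rep) / (p ⬝ᵥ y.rep)) {y | p ⬝ᵥ y.rep ≠ 0} := by
  intro y hy y' hy' h
  rw [div_eq_div_iff hy hy'] at h
  refine wedge_rep_eq_zero_iff.1 ((mul_eq_zero_iff_left hpq).1 ?_)
  simp only [wedge, Matrix.vec2_dotProduct] at h ⊢
  linear_combination -h

lemma injOn_wedge_div_wedge {p q : Fin 2 → L} (hpq : wedge p q ≠ 0) :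
    Set.InjOn (fun x : ℙ L (Fin 2 → L) => wedge x.rep q / wedge p x.rep)
      {x | wedge p x.rep ≠ 0} := by
  intro x hx x' hx' h
  rw [div_eq_div_iff hx hx'] at h
  refine wedge_rep_eq_zero_iff.1 ((mul_eq_zero_iff_left hpq).1 ?_)
  simp only [wedge] at h ⊢
  linear_combination h

lemma ncard_dotProduct_rep_ne_zero [Finite L] {p : Fin 2 → L} (hp : p ≠ 0) :
    {y : ℙ L (Fin 2 → L) | p ⬝ᵥ y.rep ≠ 0}.ncard = Nat.card L := by
  have hperp : ![p 1, -p 0] ≠ 0 := by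
    contrapose! hp
    simpa [funext_iff, Fin.forall_fin_two, and_comm] using hp
  have hcompl : {y : ℙ L (Fin 2 → L) | p ⬝ᵥ y.rep ≠ 0} = {Projectivization.mk L _ hperp}ᶜ := by
    ext y
    have hdot : p ⬝ᵥ y.rep = wedge ![p 1, -p 0] y.rep := by
      simp [wedge, Matrix.vec2_dotProduct, add_comm]
    have hzero : p ⬝ᵥ y.rep = 0 ↔ y = Projectivization.mk L _ hperp := by
      rw [hdot, wedge_eq_zero_iff hperp y.rep_nonzero, y.mk_rep, eq_comm]
    exact hzero.not
  rw [hcompl, Set.ncard_compl, Projectivization.card_of_finrank_two L (Fin 2 → L) (by simp)]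
  simp

end ProjectiveLine

section ProjectiveNormGraph

variable (F L : Type*) [Field F] [Field L] [Algebra F L]

/-- The projective norm graph on `ℙ¹(L) × Fˣ`, with `(x, α)` and `(y, β)` adjacent when
`N(x · y) α β = 1`. Here `x · y` is computed on the representatives picked by
`Projectivization.rep`; other representatives rescale the second coordinates and give an isomorphic
graph. -/
def projectiveNormGraph : SimpleGraph (ℙ L (Fin 2 → L) × Fˣ) where
  Adj u v := u ≠ v ∧ Algebra.norm F (u.1.rep ⬝ᵥ v.1.rep) * u.2 * v.2 = 1
  symm := ⟨fun u v h => ⟨h.1.symm, by rw [dotProduct_comm, mul_right_comm]; exact h.2⟩⟩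
  loopless := ⟨fun u h => h.1 rfl⟩

namespace projectiveNormGraph

variable {F L} {u u' v : ℙ L (Fin 2 → L) × Fˣ}

lemma norm_ne_zero_of_adj (h : (projectiveNormGraph F L).Adj u v) :
    Algebra.norm F (u.1.rep ⬝ᵥ v.1.rep) ≠ 0 :=
  left_ne_zero_of_mul (left_ne_zero_of_mul_eq_one h.2)

lemma dotProduct_ne_zero_of_adj [FiniteDimensional F L] (h : (projectiveNormGraph F L).Adj u v) :
    u.1.rep ⬝ᵥ v.1.rep ≠ 0 := Algebra.norm_ne_zero_iff.1 (norm_ne_zero_of_adj h)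

lemma eq_of_adj_of_fst_eq (h : (projectiveNormGraph F L).Adj u v)
    (h' : (projectiveNormGraph F L).Adj u' v) (hfst : u.1 = u'.1) : u = u' := by
  have hsnd := h.2.trans h'.2.symm
  rw [← hfst] at hsnd
  exact Prod.ext hfst (Units.ext
    (mul_left_cancel₀ (norm_ne_zero_of_adj h) (mul_right_cancel₀ v.2.ne_zero hsnd)))

lemma norm_add_eq_of_adj [FiniteDimensional F L] (h : (projectiveNormGraph F L).Adj u v)
    (h' : (projectiveNormGraph F L).Adj u' v) (hne : u.1 ≠ u'.1) {q : Fin 2 → L}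
    (hq : wedge u.1.rep q ≠ 0) :
    Algebra.norm F (q ⬝ᵥ v.1.rep / u.1.rep ⬝ᵥ v.1.rep +
        wedge u'.1.rep q / wedge u.1.rep u'.1.rep) =
      u.2 / (Algebra.norm F (wedge u.1.rep u'.1.rep / wedge u.1.rep q) * u'.2) := by
  have hwedge : wedge u.1.rep u'.1.rep ≠ 0 := wedge_rep_eq_zero_iff.not.2 hne
  have hscale : Algebra.norm F (wedge u.1.rep u'.1.rep / wedge u.1.rep q) ≠ 0 :=
    Algebra.norm_ne_zero_iff.2 (div_ne_zero hwedge hq)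
  have hnorm' := h'.2
  rw [dotProduct_eq_mul_div_add_div hq hwedge (dotProduct_ne_zero_of_adj h), map_mul,
    map_mul] at hnorm'
  rw [eq_div_iff (mul_ne_zero hscale u'.2.ne_zero)]
  apply mul_left_cancel₀ (mul_ne_zero (norm_ne_zero_of_adj h) v.2.ne_zero)
  linear_combination hnorm' - h.2

theorem encard_commonNeighbors_le_factorial [FiniteDimensional F L] [IsGalois F L] {k : ℕ}
    (hk : Module.finrank F L = k) {u : Fin (k + 1) → ℙ L (Fin 2 → L) × Fˣ}
    (hu : Function.Injective u) :
    {v | ∀ i, (projectiveNormGraph F L).Adj (u i) v}.encard ≤ k.factorial := by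
  obtain hempty | ⟨v₀, hv₀⟩ :=
    {v | ∀ i, (projectiveNormGraph F L).Adj (u i) v}.eq_empty_or_nonempty
  · simp [hempty]
  have hfst : Function.Injective fun i => (u i).1 := fun i i' h =>
    hu (eq_of_adj_of_fst_eq (hv₀ i) (hv₀ i') h)
  have hne (i : Fin k) : (u 0).1 ≠ (u i.succ).1 := hfst.ne (Fin.succ_ne_zero i).symm
  obtain ⟨q, hq⟩ := exists_wedge_ne_zero (u 0).1.rep_nonzero
  let t (v : ℙ L (Fin 2 → L) × Fˣ) : L := q ⬝ᵥ v.1.rep / (u 0).1.rep ⬝ᵥ v.1.rep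
  have ht : Set.InjOn t {v | ∀ i, (projectiveNormGraph F L).Adj (u i) v} := fun v hv v' hv' h =>
    eq_of_adj_of_fst_eq (hv 0).symm (hv' 0).symm (injOn_dotProduct_div_dotProduct hq
      (dotProduct_ne_zero_of_adj (hv 0)) (dotProduct_ne_zero_of_adj (hv' 0)) h)
  let c (i : Fin k) : L := wedge (u i.succ).1.rep q / wedge (u 0).1.rep (u i.succ).1.rep
  have hc : Function.Injective c := fun i i' h =>
    Fin.succ_injective _ (hfst (injOn_wedge_div_wedge hq (wedge_rep_eq_zero_iff.not.2 (hne i))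
      (wedge_rep_eq_zero_iff.not.2 (hne i')) h))
  subst hk
  refine le_trans ?_ (encard_norm_add_eq_le_factorial (Fintype.card_fin _) hc fun i => (u 0).2 /
    (Algebra.norm F (wedge (u 0).1.rep (u i.succ).1.rep / wedge (u 0).1.rep q) * (u i.succ).2))
  exact Set.encard_le_encard_of_injOn
    (fun v hv i => norm_add_eq_of_adj (hv 0) (hv i.succ) (hne i) hq) ht

theorem natCard_sub_one_le_degree [Finite L] (u : ℙ L (Fin 2 → L) × Fˣ)
    [Fintype ((projectiveNormGraph F L).neighborSet u)] :
    Nat.card L - 1 ≤ (projectiveNormGraph F L).degree u := by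
  have hsubset : {y : ℙ L (Fin 2 → L) | u.1.rep ⬝ᵥ y.rep ≠ 0} ⊆
      Prod.fst '' insert u ((projectiveNormGraph F L).neighborSet u) := by
    intro y hy
    let N : Fˣ := Units.mk0 _ (Algebra.norm_ne_zero_iff.2 hy)
    obtain hloop | hne := eq_or_ne u (y, (N * u.2)⁻¹)
    · exact ⟨u, Set.mem_insert _ _, congrArg Prod.fst hloop⟩
    · exact ⟨_, .inr ⟨hne, congrArg Units.val (mul_inv_cancel (N * u.2))⟩, rfl⟩
  have hfinite : (insert u ((projectiveNormGraph F L).neighborSet u)).Finite :=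
    (Set.toFinite _).insert u
  rw [Nat.sub_le_iff_le_add, ← ncard_dotProduct_rep_ne_zero u.1.rep_nonzero,
    ← SimpleGraph.card_neighborSet_eq_degree, ← Nat.card_eq_fintype_card, Nat.card_coe_set_eq]
  exact (Set.ncard_le_ncard hsubset (hfinite.image _)).trans
    ((Set.ncard_image_le hfinite).trans (Set.ncard_insert_le _ _))

theorem natCard_sub_one_mul_le_two_mul_ncard_edgeSet [Finite L] :
    (Nat.card L - 1) * Nat.card (ℙ L (Fin 2 → L) × Fˣ) ≤
      2 * (projectiveNormGraph F L).edgeSet.ncard := by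
  classical
  have := Finite.of_injective _ (FaithfulSMul.algebraMap_injective F L)
  have := Fintype.ofFinite (ℙ L (Fin 2 → L) × Fˣ)
  calc
    _ = ∑ _u : ℙ L (Fin 2 → L) × Fˣ, (Nat.card L - 1) := by
      rw [Finset.sum_const, Finset.card_univ, smul_eq_mul, mul_comm,
        Fintype.card_eq_nat_card]
    _ ≤ ∑ u, (projectiveNormGraph F L).degree u :=
      Finset.sum_le_sum fun u _ => natCard_sub_one_le_degree u
    _ = 2 * (projectiveNormGraph F L).edgeSet.ncard := by
      rw [SimpleGraph.sum_degrees_eq_twice_card_edges, ← SimpleGraph.coe_edgeFinset,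
        Set.ncard_coe_finset]

end projectiveNormGraph

end ProjectiveNormGraph

/-- For every prime power `q` and integer `r ≥ 2` there is a simple graph on
`n = (q^{r−1}+1)(q−1)` vertices that contains no `K_{r,(r−1)!+1}` subgraph and has at
least `(q^{2r−2}−1)(q−1)/2` edges. -/
theorem exists_Kr_free_graph {q r : ℕ} (hq : IsPrimePow q) (hr : 2 ≤ r) :
    ∃ (V : Type) (_ : Fintype V) (G : SimpleGraph V),
      Fintype.card V = (q ^ (r - 1) + 1) * (q - 1) ∧
      (¬ ∃ (u : Fin r → V) (v : Fin ((r - 1).factorial + 1) → V),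
        Function.Injective u ∧ Function.Injective v ∧
        (∀ i j, u i ≠ v j) ∧ (∀ i j, G.Adj (u i) (v j))) ∧
      (q ^ (2 * r - 2) - 1) * (q - 1) ≤ 2 * G.edgeSet.ncard := by
  obtain ⟨k, hk, rfl⟩ : ∃ k, k ≠ 0 ∧ r = k + 1 := ⟨r - 1, by omega, by omega⟩
  obtain ⟨p, n, hp, hn, rfl⟩ := (isPrimePow_nat_iff q).1 hq
  have := Fact.mk hp
  have := NeZero.mk hk
  let F := GaloisField p n
  let L := FiniteField.Extension F p k
  have hF : Nat.card F = p ^ n := GaloisField.card p n hn.ne'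
  have hL : Nat.card L = (p ^ n) ^ k := by rw [FiniteField.natCard_extension, hF]
  have hV : Nat.card (ℙ L (Fin 2 → L) × Fˣ) = ((p ^ n) ^ k + 1) * (p ^ n - 1) := by
    rw [Nat.card_prod, Projectivization.card_of_finrank_two L (Fin 2 → L) (by simp),
      Nat.card_units, hL, hF]
  refine ⟨ℙ L (Fin 2 → L) × Fˣ, Fintype.ofFinite _, projectiveNormGraph F L, ?_, ?_, ?_⟩
  · rw [Fintype.card_eq_nat_card, hV, Nat.add_sub_cancel]
  · rintro ⟨u, v, hu, hv, -, hadj⟩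
    have hrange : Set.range v ⊆ {w | ∀ i, (projectiveNormGraph F L).Adj (u i) w} :=
      Set.range_subset_iff.2 fun j i => hadj i j
    have hcard := hv.encard_range.trans ((Set.encard_le_encard hrange).trans
      (projectiveNormGraph.encard_commonNeighbors_le_factorial
        (FiniteField.finrank_extension F p k) hu))
    rw [ENat.card_eq_coe_natCard, Nat.card_fin, Nat.cast_le] at hcard
    exact hcard.not_gt (Nat.lt_succ_self _)
  · have hedges := projectiveNormGraph.natCard_sub_one_mul_le_two_mul_ncard_edgeSet
      (F := F) (L := L)
    rwa [hV, hL, ← mul_assoc, mul_comm (_ - 1), ← Nat.sq_sub_sq _ 1, one_pow, ← pow_mul,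
      mul_comm k] at hedges
end
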